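/- For every n ≥ 0, the number of Kreweras words of length 3n equals 4^n/((n+1)(2n+1))·binomial(3n, n); equivalently, this number multiplied by (n+1)(2n+1) equals 4^n·binomial(3n, n). -/

import Mathlib

/-- The three letters of a Kreweras word. -/
inductive KLetter : Type
  | A | B | C
deriving DecidableEq, Repr

open KLetter

/-- `w` is a Kreweras word of length `3 * n`: it has `n` `A`'s, `n` `B`'s, `n` `C`'s,
and every prefix has at least as many `A`'s as `B`'s and at least as many `A`'s as `C`'s. -/
def IsKrewerasWord (n : ℕ) (w : List KLetter) : Prop :=
  w.length = 3 * n ∧ w.count A = n ∧ w.count B = n ∧ w.count C = n ∧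
  ∀ k : ℕ, (w.take k).count B ≤ (w.take k).count A ∧
           (w.take k).count C ≤ (w.take k).count A

/-- `kiota w` is the smallest index `ι ≥ 1` (1-indexed) such that the prefix of
length `ι` of `w` has equally many `A`'s as `B`'s, or equally many `A`'s as `C`'s
(and `0` if no such index exists). -/
def kiota (w : List KLetter) : ℕ :=
  (((List.range (w.length + 1)).filter fun k =>
      decide (1 ≤ k) &&
      (((w.take k).count A == (w.take k).count B) ||
       ((w.take k).count A == (w.take k).count C))).headD 0)

/-- Promotion of a Kreweras word:
`pro w = (w₂, …, w_{ι-1}, A, w_{ι+1}, …, w_{3n}, w_ι)` where `ι = kiota w`. -/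
def pro (w : List KLetter) : List KLetter :=
  ((w.drop 1).set (kiota w - 2) A) ++ [w.getD (kiota w - 1) A]

/-- The trip permutation `σ_w` of a Kreweras word of length `3 * n`, as a function on
1-indexed positions: `σ_w i` is the unique element of `{1, …, 3n}` congruent to
`kiota (pro^[i-1] w) + i - 1` modulo `3 * n`. -/
def ksigma (n : ℕ) (w : List KLetter) (i : ℕ) : ℕ :=
  (kiota (pro^[i - 1] w) + i - 2) % (3 * n) + 1

/-- `keps w i` is the letter of `pro^[i-1] w` in (1-indexed) position `kiota (pro^[i-1] w)`. -/
def keps (w : List KLetter) (i : ℕ) : KLetter :=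
  (pro^[i - 1] w).getD (kiota (pro^[i - 1] w) - 1) A

/-- The negation swapping `B` and `C` (and fixing `A`). -/
def negL : KLetter → KLetter
  | A => A
  | B => C
  | C => B

open Classical in
/-- The involution `τ_i` on Kreweras words of length `3 * n`: swap the letters in
(1-indexed) positions `i` and `i + 1` if the result is again a Kreweras word,
and otherwise do nothing. -/
noncomputable def tau (n i : ℕ) (w : List KLetter) : List KLetter :=
  let w' := (w.set (i - 1) (w.getD i A)).set i (w.getD (i - 1) A)
  if IsKrewerasWord n w' then w' else w

/-- `tauDown n j = τ_j ∘ τ_{j-1} ∘ ⋯ ∘ τ_1`. -/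
noncomputable def tauDown (n : ℕ) : ℕ → List KLetter → List KLetter
  | 0, w => w
  | j + 1, w => tau n (j + 1) (tauDown n j w)

/-- `evacAux n j = (tauDown n 1) ∘ (tauDown n 2) ∘ ⋯ ∘ (tauDown n j)`. -/
noncomputable def evacAux (n : ℕ) : ℕ → List KLetter → List KLetter
  | 0, w => w
  | j + 1, w => evacAux n j (tauDown n (j + 1) w)

/-- Evacuation on Kreweras words of length `3 * n`:
`evac = (τ_1) ∘ (τ_2 ∘ τ_1) ∘ ⋯ ∘ (τ_{3n-1} ∘ ⋯ ∘ τ_2 ∘ τ_1)`. -/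
noncomputable def evac (n : ℕ) (w : List KLetter) : List KLetter :=
  evacAux n (3 * n - 1) w

/-- `tauAsc n k c = τ_{k+c-1} ∘ ⋯ ∘ τ_{k+1} ∘ τ_k`. -/
noncomputable def tauAsc (n k : ℕ) : ℕ → List KLetter → List KLetter
  | 0, w => w
  | j + 1, w => tau n (k + j) (tauAsc n k j w)

/-- `evacStarAux n j = (tauAsc n 1 (3n-1)) ∘ (tauAsc n 2 (3n-2)) ∘ ⋯ ∘ (tauAsc n j (3n-j))`. -/
noncomputable def evacStarAux (n : ℕ) : ℕ → List KLetter → List KLetter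
  | 0, w => w
  | j + 1, w => evacStarAux n j (tauAsc n (j + 1) (3 * n - (j + 1)) w)

/-- Dual evacuation on Kreweras words of length `3 * n`:
`evac* = (τ_{3n-1} ∘ ⋯ ∘ τ_1) ∘ (τ_{3n-1} ∘ ⋯ ∘ τ_2) ∘ ⋯ ∘ (τ_{3n-1})`. -/
noncomputable def evacStar (n : ℕ) (w : List KLetter) : List KLetter :=
  evacStarAux n (3 * n - 1) w

/-- The three-element "V"-shaped poset: `a < b`, `a < c`, with `b`, `c` incomparable. -/
inductive VP : Type
  | a | b | c
deriving DecidableEq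

instance : PartialOrder VP where
  le x y := x = y ∨ x = VP.a
  le_refl x := Or.inl rfl
  le_trans x y z hxy hyz := by
    rcases hxy with rfl | rfl
    · exact hyz
    · exact Or.inr rfl
  le_antisymm x y hxy hyx := by
    rcases hxy with rfl | rfl
    · rfl
    · rcases hyx with rfl | rfl <;> rfl

/-- The labeling of elements of `V(n) = VP × Fin n` by letters. -/
def vlabel {n : ℕ} (p : VP × Fin n) : KLetter :=
  match p.1 with
  | VP.a => A
  | VP.b => B
  | VP.c => C

/-- `L` is a linear extension of `V(n) = VP × Fin n` (with the product order):
a list of all elements of `V(n)`, each appearing once, such that `L_i ≤ L_j`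
implies `i ≤ j`. -/
def IsLinearExtension (n : ℕ) (L : List (VP × Fin n)) : Prop :=
  L.Nodup ∧ (∀ p : VP × Fin n, p ∈ L) ∧
  ∀ i j : Fin L.length, L.get i ≤ L.get j → (i : ℕ) ≤ (j : ℕ)

/-- A connected Kreweras word: a Kreweras word of length `3 * n` having no proper
nonempty consecutive substring which is itself a Kreweras word. -/
def ConnectedKrewerasWord (n : ℕ) (w : List KLetter) : Prop :=
  IsKrewerasWord n w ∧
  ∀ (u : List KLetter) (m : ℕ), u <:+: w → u ≠ [] → u ≠ w → ¬ IsKrewerasWord m u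

/-!
Read as steps `(1, 1)`, `(-1, 0)`, `(0, -1)`, the letters `A`, `B`, `C` turn a Kreweras word into a
walk in the quarter plane from the origin to itself. Let `Q(x, y)` count all such walks by length
(variable `t`) and endpoint, and let `R(x) = Q(x, 0)`. Removing the last step gives
`K Q(x, y) = xy - t x R(x) - t y R(y)` with `K = xy - t (x + y + x²y²)`. On the curve `K = 0` this
separates the variables: `t x R(x) + 1/x - 1/(2t)` is the negative of the same expression in `y`, so
its square is unchanged when `x` is replaced by `y`, and so is `1/x² - 1/(tx) - x`. Up to a constant
their difference is `t²x²R(x)² + (2t - x) R(x) + x`, which has no pole; an invariant without poles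
does not depend on `x`, so this one equals its value `2t R(0)` at `x = 0`.

The discriminant of this quadratic equation for `R(x)` has a double root in `x`. Writing the root
as `2tg` gives `g = 1 + 4t³g³` and `R(0) = g (1 - 2t³g³)`. Conversely the equation, with `R(0)`
taken to be the constant term of `R(x)`, has only one solution, so it is enough that it is solved
by `g c (1 - 2t³g³c)` with `c = 1 + t²xg²c²`, where `c = 1` at `x = 0`. So `g` is the generating
function `T` of ternary trees evaluated at `4t³`, and `2R(0)` is `T (3 - T)` at the same point;
first order differential relations between `T`, `T²` and `T (3 - T)` give the coefficients.
-/

namespace Kreweras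

open PowerSeries hiding C
open scoped Polynomial

section Ballot

/-- The prefix condition of Kreweras words: the walk with steps `A = (1, 1)`, `B = (-1, 0)`,
`C = (0, -1)` stays in the quarter plane. -/
def IsBallot (w : List KLetter) : Prop :=
  ∀ u, u <+: w → u.count B ≤ u.count A ∧ u.count C ≤ u.count A

theorem isBallot_nil : IsBallot [] := by
  simp [IsBallot]

theorem isBallot_concat {w : List KLetter} {l : KLetter} :
    IsBallot (w ++ [l]) ↔ IsBallot w ∧
      (w ++ [l]).count B ≤ (w ++ [l]).count A ∧ (w ++ [l]).count C ≤ (w ++ [l]).count A := by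
  simp only [IsBallot, List.prefix_concat_iff, or_imp, forall_and, forall_eq]
  tauto

theorem isBallot_iff_forall_take {w : List KLetter} :
    IsBallot w ↔ ∀ k, (w.take k).count B ≤ (w.take k).count A ∧
      (w.take k).count C ≤ (w.take k).count A := by
  refine ⟨fun h k => h _ (List.take_prefix k w), fun h u hu => ?_⟩
  rw [List.prefix_iff_eq_take.1 hu]
  exact h _

theorem IsBallot.count_le {w : List KLetter} (h : IsBallot w) :
    w.count B ≤ w.count A ∧ w.count C ≤ w.count A :=
  h w List.prefix_rfl

theorem negL_negL (l : KLetter) : negL (negL l) = l := by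
  cases l <;> rfl

theorem count_map_negL (w : List KLetter) (l : KLetter) :
    (w.map negL).count l = w.count (negL l) := by
  conv_lhs => rw [← negL_negL l]
  exact List.count_map_of_injective w negL (Function.Involutive.injective negL_negL) (negL l)

theorem map_negL_map_negL (w : List KLetter) : (w.map negL).map negL = w := by
  simp [Function.comp_def, negL_negL]

theorem IsBallot.map_negL {w : List KLetter} (h : IsBallot w) : IsBallot (w.map negL) := by
  intro u hu
  obtain ⟨v, hv, rfl⟩ := List.prefix_map_iff.1 hu
  rw [count_map_negL, count_map_negL, count_map_negL]
  exact (h v hv).symm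

theorem isBallot_map_negL {w : List KLetter} : IsBallot (w.map negL) ↔ IsBallot w :=
  ⟨fun h => map_negL_map_negL w ▸ h.map_negL, IsBallot.map_negL⟩

theorem length_eq_count_add_count_add_count (w : List KLetter) :
    w.length = w.count A + w.count B + w.count C := by
  induction w with
  | nil => rfl
  | cons l w ih => cases l <;> grind

theorem isKrewerasWord_iff {n : ℕ} {w : List KLetter} :
    IsKrewerasWord n w ↔
      w.length = 3 * n ∧ IsBallot w ∧ w.count A ≤ w.count B ∧ w.count A ≤ w.count C := by
  have hlength := length_eq_count_add_count_add_count w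
  rw [IsKrewerasWord, ← isBallot_iff_forall_take]
  constructor
  · rintro ⟨hw, hA, hB, _, hballot⟩
    exact ⟨hw, hballot, by omega, by omega⟩
  · rintro ⟨hw, hballot, hAB, hAC⟩
    have := hballot.count_le
    exact ⟨hw, by omega, by omega, by omega, hballot⟩

end Ballot

section Words

/-- All words of length `m`, built by appending letters on the right. -/
def words : ℕ → Finset (List KLetter)
  | 0 => {[]}
  | m + 1 => (words m ×ˢ {A, B, C}).image fun p => p.1 ++ [p.2]

theorem mem_words {m : ℕ} {w : List KLetter} : w ∈ words m ↔ w.length = m := by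
  induction m generalizing w with
  | zero => simp [words]
  | succ m ih =>
    have hletter (l : KLetter) : l = A ∨ l = B ∨ l = C := by cases l <;> simp
    rcases List.eq_nil_or_concat' w with rfl | ⟨u, l, rfl⟩ <;> simp [words, ih, hletter]

theorem sum_words_succ {M : Type*} [AddCommMonoid M] (m : ℕ) (f : List KLetter → M) :
    ∑ w ∈ words (m + 1), f w = ∑ w ∈ words m, (f (w ++ [A]) + f (w ++ [B]) + f (w ++ [C])) := by
  have hinj : Function.Injective fun p : List KLetter × KLetter => p.1 ++ [p.2] := by
    rintro ⟨u, k⟩ ⟨v, l⟩ h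
    simpa using h
  rw [words, Finset.sum_image hinj.injOn, Finset.sum_product]
  simp [add_assoc]

theorem sum_words_map_negL {M : Type*} [AddCommMonoid M] (m : ℕ) (f : List KLetter → M) :
    ∑ w ∈ words m, f (w.map negL) = ∑ w ∈ words m, f w :=
  Finset.sum_nbij' (List.map negL) (List.map negL) (by simp [mem_words]) (by simp [mem_words])
    (fun w _ => map_negL_map_negL w) (fun w _ => map_negL_map_negL w) (fun _ _ => rfl)

end Words

section Weight

variable {S : Type*} [CommRing S]

open Classical in
/-- The monomial `x ^ i * y ^ j` of a ballot word whose walk ends at `(i, j)`, and `0` for other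
words. The truncated subtractions are exact on ballot words, and `x = 0` selects the walks that end
on the axis `i = 0`. -/
noncomputable def weight (x y : S) (w : List KLetter) : S :=
  if IsBallot w then x ^ (w.count A - w.count B) * y ^ (w.count A - w.count C) else 0

theorem weight_concat_A (x y : S) (w : List KLetter) :
    weight x y (w ++ [A]) = x * y * weight x y w := by
  by_cases hw : IsBallot w
  · have hle := hw.count_le
    have hwA : IsBallot (w ++ [A]) := isBallot_concat.2 ⟨hw, by simpa using ⟨by omega, by omega⟩⟩
    simp [weight, hw, hwA, Nat.sub_add_comm hle.1, Nat.sub_add_comm hle.2, pow_succ',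
      mul_mul_mul_comm]
  · simp [weight, hw, isBallot_concat]

theorem mul_weight_concat_B (x y : S) (w : List KLetter) :
    x * weight x y (w ++ [B]) = weight x y w - weight 0 y w := by
  by_cases hw : IsBallot w
  · obtain ⟨i, hi⟩ := Nat.exists_eq_add_of_le hw.count_le.1
    cases i with
    | zero => simp [weight, isBallot_concat, hi]
    | succ i =>
      have hle := hw.count_le
      have hwB : IsBallot (w ++ [B]) := isBallot_concat.2 ⟨hw, by simpa using ⟨by omega, by omega⟩⟩
      have hsub : w.count B + (i + 1) - (w.count B + 1) = i := by omega
      simp [weight, hw, hwB, hi, hsub, pow_succ', mul_assoc]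
  · simp [weight, hw, isBallot_concat]

theorem weight_map_negL (x y : S) (w : List KLetter) :
    weight x y (w.map negL) = weight y x w := by
  by_cases hw : IsBallot w <;>
    simp [weight, hw, isBallot_map_negL, count_map_negL, negL, mul_comm]

theorem mul_weight_concat_C (x y : S) (w : List KLetter) :
    y * weight x y (w ++ [C]) = weight x y w - weight x 0 w := by
  have h := mul_weight_concat_B y x (w.map negL)
  rwa [show w.map negL ++ [B] = (w ++ [C]).map negL by simp [negL], weight_map_negL,
    weight_map_negL, weight_map_negL] at h

open Classical in
theorem weight_zero_zero (w : List KLetter) :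
    weight (0 : S) 0 w =
      if IsBallot w ∧ w.count A ≤ w.count B ∧ w.count A ≤ w.count C then 1 else 0 := by
  simp only [weight, zero_pow_eq, Nat.sub_eq_zero_iff_le]
  split_ifs <;> simp_all

theorem map_weight {S' : Type*} [CommRing S'] (φ : S →+* S') (x y : S) (w : List KLetter) :
    φ (weight x y w) = weight (φ x) (φ y) w := by
  simp [weight, apply_ite φ]

end Weight

section WalkSeries

variable {S : Type*} [CommRing S]

/-- The generating function `Q(x, y)` of quarter plane walks from the origin, as a power series in
the length `t`, which is `PowerSeries.X`; `x` and `y` are arbitrary ring elements. -/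
noncomputable def walkSeries (x y : S) : S⟦X⟧ :=
  mk fun m => ∑ w ∈ words m, weight x y w

/-- The kernel `xy - t (x + y + x²y²)` of the walk. -/
noncomputable def kernel (x y : S) : S⟦X⟧ :=
  .C (x * y) - X * .C (x + y + x ^ 2 * y ^ 2)

theorem coeff_kernel_mul_of_forall_lt {x y : S} {F : S⟦X⟧} {m : ℕ}
    (hF : ∀ j < m, coeff j F = 0) : coeff m (kernel x y * F) = x * y * coeff m F := by
  rw [kernel, sub_mul, mul_assoc, map_sub, coeff_C_mul]
  cases m with
  | zero => simp
  | succ m => rw [coeff_succ_X_mul, coeff_C_mul, hF m m.lt_succ_self, mul_zero, sub_zero]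

theorem map_walkSeries {S' : Type*} [CommRing S'] (φ : S →+* S') (x y : S) :
    map φ (walkSeries x y) = walkSeries (φ x) (φ y) := by
  ext m
  simp [walkSeries, map_weight]

theorem walkSeries_comm (x y : S) : walkSeries x y = walkSeries y x := by
  ext m
  simp only [walkSeries, coeff_mk]
  rw [← sum_words_map_negL]
  simp only [weight_map_negL]

theorem coeff_zero_walkSeries (x y : S) : coeff 0 (walkSeries x y) = 1 := by
  simp [walkSeries, words, weight, isBallot_nil]

theorem mul_coeff_succ_walkSeries (x y : S) (m : ℕ) :
    x * y * coeff (m + 1) (walkSeries x y) =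
      (x + y + x ^ 2 * y ^ 2) * coeff m (walkSeries x y) - x * coeff m (walkSeries x 0) -
        y * coeff m (walkSeries 0 y) := by
  simp only [walkSeries, coeff_mk, sum_words_succ, Finset.mul_sum, ← Finset.sum_sub_distrib]
  refine Finset.sum_congr rfl fun w _ => ?_
  linear_combination (x * y) * weight_concat_A x y w + y * mul_weight_concat_B x y w +
    x * mul_weight_concat_C x y w

theorem kernel_mul_walkSeries (x y : S) :
    kernel x y * walkSeries x y =
      .C (x * y) - X * (.C x * walkSeries x 0 + .C y * walkSeries y 0) := by
  rw [walkSeries_comm y 0]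
  ext m
  simp only [kernel, sub_mul, mul_assoc, map_sub, coeff_C_mul]
  cases m with
  | zero => simp [coeff_zero_walkSeries]
  | succ m =>
    simp only [coeff_succ_X_mul, map_add (coeff m), coeff_C_mul, coeff_succ_C]
    linear_combination mul_coeff_succ_walkSeries x y m

theorem coeff_walkSeries_zero_zero (n : ℕ) :
    coeff (3 * n) (walkSeries (0 : S) 0) =
      Nat.card {w : List KLetter // IsKrewerasWord n w} := by
  classical
  simp only [walkSeries, coeff_mk, weight_zero_zero, Finset.sum_boole]
  congr 1
  exact (Nat.subtype_card _ fun w => by rw [Finset.mem_filter, mem_words, isKrewerasWord_iff]).symm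

end WalkSeries

section Invariant

variable {S : Type*} [CommRing S]

/-- The pole-free invariant `t²x²F² + (2t - x)F + x` of the kernel, where `F` stands for
`Q(x, 0)`. -/
noncomputable def invariant (x : S) (F : S⟦X⟧) : S⟦X⟧ :=
  X ^ 2 * .C x ^ 2 * F ^ 2 + (2 * X - .C x) * F + .C x

theorem map_invariant {S' : Type*} [CommRing S'] (φ : S →+* S') (x : S) (F : S⟦X⟧) :
    map φ (invariant x F) = invariant (φ x) (map φ F) := by
  simp [invariant, map_ofNat]

theorem invariant_zero (F : S⟦X⟧) : invariant 0 F = 2 * X * F := by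
  simp [invariant]

/-- The quotient by the kernel of the difference of the invariants at `x` and at `y`, multiplied
by `xy`. -/
noncomputable def invariantQuotient (x y : S) : S⟦X⟧ :=
  (.C x - .C y - X * .C (x * y) * (.C x * walkSeries x 0 - .C y * walkSeries y 0)) *
    walkSeries x y - (.C x * walkSeries x 0 - .C y * walkSeries y 0)

theorem map_invariantQuotient {S' : Type*} [CommRing S'] (φ : S →+* S') (x y : S) :
    map φ (invariantQuotient x y) = invariantQuotient (φ x) (φ y) := by
  simp [invariantQuotient, map_walkSeries]

theorem invariantQuotient_zero_right (x : S) : invariantQuotient x 0 = 0 := by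
  simp [invariantQuotient]

theorem mul_invariant_sub_invariant (x y : S) :
    .C (x * y) * (invariant x (walkSeries x 0) - invariant y (walkSeries y 0)) =
      kernel x y * invariantQuotient x y := by
  have h := kernel_mul_walkSeries x y
  simp only [invariant, invariantQuotient, kernel, map_mul, map_add, map_pow] at h ⊢
  linear_combination (X * .C x * .C y * (.C x * walkSeries x 0 - .C y * walkSeries y 0)
    - (.C x - .C y)) * h

end Invariant

section Vanishing

open Polynomial (mapRingHom)
open scoped Polynomial.Bivariate

variable {R : Type*} [CommRing R] [IsDomain R]

theorem eq_C_and_eq_zero_of_X_mul_Y_mul_eq {d : R[X]} {h : R[X][Y]} (hcoeff : h.coeff 0 = 0)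
    (heq : .C .X * Y * (.C d - d.map Polynomial.C) = .C .X * Y * h) :
    d = .C (d.coeff 0) ∧ h = 0 := by
  have hXY : (.C .X * Y : R[X][Y]) ≠ 0 := by simp
  have hdiff := mul_left_cancel₀ hXY heq
  have hd : d = .C (d.coeff 0) := by
    rw [← sub_eq_zero, ← hcoeff, ← hdiff]
    simp
  refine ⟨hd, ?_⟩
  rw [← hdiff, hd]
  simp

/-- By induction on `m`, the coefficient of `t ^ m` in `hD` is `D_m(x) - D_m(y) = H_m(x, y)` up to
the factor `xy`, and setting `y = 0` makes `D_m` constant. -/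
theorem eq_map_constantCoeff_of_kernel_mul {D : R[X]⟦X⟧} {H : R[X][Y]⟦X⟧}
    (hH : map Polynomial.constantCoeff H = 0)
    (hD : .C (.C .X * Y) * (map Polynomial.C D - map (mapRingHom Polynomial.C) D) =
      kernel (.C .X) (Y : R[X][Y]) * H) :
    D = map Polynomial.C (map Polynomial.constantCoeff D) := by
  have hvanish (m : ℕ) : coeff m D = .C ((coeff m D).coeff 0) ∧ coeff m H = 0 := by
    induction m using Nat.strong_induction_on with
    | _ m ih =>
      refine eq_C_and_eq_zero_of_X_mul_Y_mul_eq (by simpa using congrArg (coeff m) hH) ?_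
      have h := coeff_kernel_mul_of_forall_lt (x := .C .X) (y := (Y : R[X][Y]))
        fun j hj => (ih j hj).2
      rw [← h, ← hD, coeff_C_mul]
      simp
  ext1 m
  simpa using (hvanish m).1

theorem invariant_X_walkSeries :
    invariant .X (walkSeries (.X : R[X]) 0) = 2 * X * walkSeries 0 0 := by
  have hdiff := mul_invariant_sub_invariant (.C .X : R[X][Y]) Y
  rw [eq_map_constantCoeff_of_kernel_mul (R := R) (D := invariant .X (walkSeries .X 0))
    (H := invariantQuotient (.C .X) Y)]
  · simp [map_invariant, map_walkSeries, invariant_zero, map_ofNat]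
  · simp [map_invariantQuotient, invariantQuotient_zero_right]
  · simpa only [map_invariant, map_walkSeries, Polynomial.coe_mapRingHom, Polynomial.map_X,
      map_zero] using hdiff

end Vanishing

section FixedPoint

variable {R : Type*} [CommRing R]

theorem eq_of_forall_X_pow_dvd_sub {f g : R⟦X⟧} (h : ∀ n, X ^ n ∣ f - g) : f = g := by
  ext n
  simpa [sub_eq_zero] using X_pow_dvd_iff.1 (h (n + 1)) n n.lt_succ_self

theorem exists_forall_X_pow_dvd_sub {s : ℕ → R⟦X⟧} (hs : ∀ n, X ^ n ∣ s (n + 1) - s n) :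
    ∃ f, ∀ n, X ^ n ∣ f - s n := by
  refine ⟨mk fun m => coeff m (s (m + 1)), fun n => X_pow_dvd_iff.2 fun m hm => ?_⟩
  rw [map_sub, coeff_mk, sub_eq_zero]
  induction n, hm using Nat.le_induction with
  | base => rfl
  | succ n hmn ih =>
    have h := X_pow_dvd_iff.1 (hs n) m hmn
    rw [map_sub, sub_eq_zero] at h
    rw [ih, h]

theorem exists_eq_add_X_mul_eval (a : R⟦X⟧) (p : Polynomial R⟦X⟧) :
    ∃ f, f = a + X * p.eval f := by
  have hcontr {n : ℕ} {f g : R⟦X⟧} (h : X ^ n ∣ f - g) :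
      X ^ (n + 1) ∣ (a + X * p.eval f) - (a + X * p.eval g) := by
    rw [add_sub_add_left_eq_sub, ← mul_sub, pow_succ']
    exact mul_dvd_mul_left X (h.trans (Polynomial.sub_dvd_eval_sub f g p))
  let s : ℕ → R⟦X⟧ := fun n => (fun f => a + X * p.eval f)^[n] 0
  have hs (n : ℕ) : s (n + 1) = a + X * p.eval (s n) := Function.iterate_succ_apply' _ n 0
  have hcauchy (n : ℕ) : X ^ n ∣ s (n + 1) - s n := by
    induction n with
    | zero => simp
    | succ n ih =>
      rw [hs (n + 1), hs n]
      exact hcontr (hs n ▸ ih)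
  obtain ⟨f, hf⟩ := exists_forall_X_pow_dvd_sub hcauchy
  refine ⟨f, eq_of_forall_X_pow_dvd_sub fun n => ?_⟩
  have hstep := hcontr (hf n)
  rw [← hs] at hstep
  have h := (hf (n + 1)).sub hstep
  rw [sub_sub_sub_cancel_right] at h
  exact (pow_dvd_pow X n.le_succ).trans h

end FixedPoint

section CatalyticEquation

theorem eq_of_invariant_X_eq {R : Type*} [CommRing R] [IsDomain R] {F G : R[X]⟦X⟧}
    (hF : invariant .X F = 2 * X * map Polynomial.C (map Polynomial.constantCoeff F))
    (hG : invariant .X G = 2 * X * map Polynomial.C (map Polynomial.constantCoeff G)) :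
    F = G := by
  have hX : ¬(X : R[X]⟦X⟧) ∣ .C .X := by simp [X_dvd_iff]
  refine eq_of_forall_X_pow_dvd_sub fun n => ?_
  induction n with
  | zero => simp
  | succ n ih =>
    obtain ⟨k, hk⟩ := ih
    have hconst := congrArg (fun f => map Polynomial.C (map Polynomial.constantCoeff f)) hk
    simp only [map_sub, map_mul, map_pow, map_X] at hconst
    refine X_prime.pow_dvd_of_dvd_mul_left (n + 1) hX
      ⟨(X * .C .X ^ 2 * (F + G) + 2) * k -
        2 * map Polynomial.C (map Polynomial.constantCoeff k), ?_⟩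
    rw [invariant] at hF hG
    linear_combination hG - hF + (X ^ 2 * .C .X ^ 2 * (F + G) + 2 * X) * hk - 2 * X * hconst

theorem invariant_eq_of_parametrization {S : Type*} [CommRing S] {x : S} {g c : S⟦X⟧}
    (hg : g = 1 + 4 * X ^ 3 * g ^ 3) (hc : c = 1 + X ^ 2 * .C x * g ^ 2 * c ^ 2) :
    invariant x (g * c * (1 - 2 * X ^ 3 * g ^ 3 * c)) =
      2 * X * (g * (1 - 2 * X ^ 3 * g ^ 3)) := by
  rw [invariant]
  linear_combination (-.C x * c * (1 - 2 * X ^ 3 * g ^ 3 * c)) * hg +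
    (-.C x * (1 - 2 * X ^ 3 * g ^ 3 * c) ^ 2 + 2 * X * g * (1 - 2 * X ^ 3 * g ^ 3 * (1 + c))) * hc

theorem walkSeries_zero_zero {R : Type*} [CommRing R] [IsDomain R] {g : R⟦X⟧}
    (hg : g = 1 + 4 * X ^ 3 * g ^ 3) :
    walkSeries 0 0 = g * (1 - 2 * X ^ 3 * g ^ 3) := by
  obtain ⟨c, hc⟩ : ∃ c : R[X]⟦X⟧, c = 1 + X ^ 2 * .C .X * map Polynomial.C g ^ 2 * c ^ 2 := by
    obtain ⟨c, hc⟩ := exists_eq_add_X_mul_eval (1 : R[X]⟦X⟧)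
      (.C (X * .C .X * map Polynomial.C g ^ 2) * .X ^ 2)
    refine ⟨c, hc.trans ?_⟩
    simp only [Polynomial.eval_mul, Polynomial.eval_C, Polynomial.eval_pow, Polynomial.eval_X]
    ring
  have hg' : map Polynomial.C g = 1 + 4 * X ^ 3 * map Polynomial.C g ^ 3 := by
    simpa [map_ofNat] using congrArg (map Polynomial.C) hg
  have hc₀ : map Polynomial.constantCoeff c = 1 := by
    simpa using congrArg (map Polynomial.constantCoeff) hc
  have hg₀ : map Polynomial.constantCoeff (map Polynomial.C g) = g := by
    ext
    simp
  have hsol : walkSeries (.X : R[X]) 0 =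
      map Polynomial.C g * c * (1 - 2 * X ^ 3 * map Polynomial.C g ^ 3 * c) := by
    apply eq_of_invariant_X_eq
    · simpa [map_walkSeries] using invariant_X_walkSeries
    · rw [invariant_eq_of_parametrization hg' hc]
      simp [hc₀, hg₀, map_ofNat]
  simpa [map_walkSeries, hc₀, hg₀, map_ofNat] using congrArg (map Polynomial.constantCoeff) hsol

end CatalyticEquation

section TernaryTrees

variable {R : Type*} [CommRing R]

/-- The Euler operator `X * d/dX`, which multiplies the coefficient of `X ^ m` by `m`. -/
noncomputable def euler : Derivation R R⟦X⟧ R⟦X⟧ :=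
  (X : R⟦X⟧) • derivative R

theorem coeff_euler (f : R⟦X⟧) (m : ℕ) : coeff m (euler f) = m * coeff m f := by
  cases m with
  | zero => simp [euler]
  | succ m => simp [euler, coeff_succ_X_mul, coeff_derivative, mul_comm]

theorem euler_X : euler (X : R⟦X⟧) = X := by
  simp [euler]

theorem euler_ofNat (n : ℕ) [n.AtLeastTwo] : euler (ofNat(n) : R⟦X⟧) = 0 :=
  euler.map_natCast n

theorem choose_three_mul_succ (n : ℕ) :
    2 * (n + 1) * (2 * n + 1) * (3 * (n + 1)).choose (n + 1) =
      3 * (3 * n + 1) * (3 * n + 2) * (3 * n).choose n := by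
  have h₁ := Nat.choose_mul_succ_eq (3 * n) n
  have h₂ := Nat.choose_mul_succ_eq (3 * n + 1) n
  have h₃ := Nat.add_one_mul_choose_eq (3 * n + 2) n
  rw [show 3 * n + 1 - n = 2 * n + 1 by omega] at h₁
  rw [show 3 * n + 1 + 1 - n = 2 * n + 2 by omega] at h₂
  rw [show 3 * (n + 1) = 3 * n + 2 + 1 by ring]
  zify at h₁ h₂ h₃ ⊢
  linear_combination -3 * (3 * n + 2) * h₁ - 3 * (2 * n + 1) * h₂ - 2 * (2 * n + 1) * h₃

/-- `T` is the generating function of ternary trees by number of internal nodes. Combinatorially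
the equation reads: a tree is a leaf, or a node with three subtrees. -/
structure IsTernaryTreeSeries (T : R⟦X⟧) : Prop where
  eq_one_add_X_mul : T = 1 + X * T ^ 3

theorem exists_isTernaryTreeSeries (R : Type*) [CommRing R] :
    ∃ T : R⟦X⟧, IsTernaryTreeSeries T := by
  obtain ⟨T, hT⟩ := exists_eq_add_X_mul_eval (1 : R⟦X⟧) (Polynomial.X ^ 3)
  exact ⟨T, ⟨by simpa only [Polynomial.eval_pow, Polynomial.eval_X] using hT⟩⟩

namespace IsTernaryTreeSeries

variable {T : R⟦X⟧}

theorem euler_eq (hT : IsTernaryTreeSeries T) :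
    euler T = X * T ^ 3 + 3 * X * T ^ 2 * euler T := by
  have h := congrArg euler hT.eq_one_add_X_mul
  simp only [map_add, Derivation.map_one_eq_zero, Derivation.leibniz, Derivation.leibniz_pow,
    euler_X, smul_eq_mul, nsmul_eq_mul] at h
  push_cast at h
  linear_combination h

theorem sub_mul_euler (hT : IsTernaryTreeSeries T) :
    (3 - 2 * T) * euler T = T * (T - 1) := by
  linear_combination T * hT.euler_eq - (T + 3 * euler T) * hT.eq_one_add_X_mul

theorem add_one_mul_coeff_mul_three_sub (hT : IsTernaryTreeSeries T) (n : ℕ) :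
    (n + 1) * coeff n (T * (3 - T)) = 2 * coeff n T := by
  have h : euler (T * (3 - T)) + T * (3 - T) = .C 2 * T := by
    rw [Derivation.leibniz, map_sub, euler_ofNat, smul_eq_mul, smul_eq_mul, map_ofNat]
    linear_combination hT.sub_mul_euler
  have hn := congrArg (coeff n) h
  rw [map_add, coeff_euler, coeff_C_mul] at hn
  linear_combination hn

theorem add_one_mul_coeff_sq (hT : IsTernaryTreeSeries T) (n : ℕ) :
    (n + 1) * coeff n (T ^ 2) = (3 * n + 1) * coeff n T := by
  have h : euler (T ^ 2) + T ^ 2 = .C 3 * euler T + T := by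
    rw [pow_two, Derivation.leibniz, smul_eq_mul, map_ofNat]
    linear_combination -hT.sub_mul_euler
  have hn := congrArg (coeff n) h
  rw [map_add, map_add, coeff_C_mul, coeff_euler, coeff_euler] at hn
  linear_combination hn

theorem two_mul_coeff_succ (hT : IsTernaryTreeSeries T) (n : ℕ) :
    2 * (2 * n + 3) * coeff (n + 1) T = 3 * (3 * n + 2) * coeff n (T ^ 2) := by
  have h : .C 4 * euler T + .C 2 * T - .C 2 =
      X * (.C 9 * euler (T ^ 2) + .C 6 * T ^ 2) := by
    rw [pow_two, Derivation.leibniz, smul_eq_mul]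
    simp only [map_ofNat]
    -- Multiply by `T`, then by its inverse `1 - X * T ^ 2`.
    linear_combination (1 - X * T ^ 2) * (6 * hT.euler_eq - 2 * hT.sub_mul_euler) -
      (4 * euler T + 2 * T - 2 - X * (18 * T * euler T + 6 * T ^ 2)) * hT.eq_one_add_X_mul
  have hn := congrArg (coeff (n + 1)) h
  simp only [map_add, map_sub, coeff_succ_X_mul, coeff_C_mul, coeff_succ_C, coeff_euler] at hn
  push_cast at hn
  linear_combination hn

theorem two_mul_add_one_mul_coeff [IsDomain R] [CharZero R] (hT : IsTernaryTreeSeries T) (n : ℕ) :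
    (2 * n + 1) * coeff n T = (3 * n).choose n := by
  induction n with
  | zero => simpa using congrArg (coeff 0) hT.eq_one_add_X_mul
  | succ n ih =>
    have hne : (2 * (n + 1) * (2 * n + 1) : R) ≠ 0 := by norm_cast
    have hchoose := congrArg (Nat.cast (R := R)) (choose_three_mul_succ n)
    refine mul_left_cancel₀ hne ?_
    push_cast at hchoose ⊢
    linear_combination (n + 1) * (2 * n + 1) * hT.two_mul_coeff_succ n +
      3 * (3 * n + 2) * (2 * n + 1) * hT.add_one_mul_coeff_sq n +
      3 * (3 * n + 1) * (3 * n + 2) * ih - hchoose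

end IsTernaryTreeSeries

end TernaryTrees

section Counting

variable {R : Type*} [CommRing R] [IsDomain R] {T : R⟦X⟧}

theorem two_mul_walkSeries_zero_zero (hT : IsTernaryTreeSeries T) :
    2 * walkSeries 0 0 = expand 3 three_ne_zero (rescale 4 (T * (3 - T))) := by
  have hg : expand 3 three_ne_zero (rescale 4 T) =
      1 + 4 * X ^ 3 * expand 3 three_ne_zero (rescale 4 T) ^ 3 := by
    simpa [rescale_X, map_ofNat] using
      congrArg (fun f => expand 3 three_ne_zero (rescale 4 f)) hT.eq_one_add_X_mul
  rw [walkSeries_zero_zero hg]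
  simp only [map_mul, map_sub, map_ofNat]
  linear_combination expand 3 three_ne_zero (rescale 4 T) * hg

theorem two_mul_coeff_walkSeries_zero_zero (hT : IsTernaryTreeSeries T) (n : ℕ) :
    2 * coeff (3 * n) (walkSeries (0 : R) 0) = 4 ^ n * coeff n (T * (3 - T)) := by
  have h := congrArg (coeff (3 * n)) (two_mul_walkSeries_zero_zero hT)
  rw [coeff_expand_mul, coeff_rescale, two_mul, map_add] at h
  linear_combination h

theorem coeff_walkSeries_zero_zero_mul [CharZero R] (n : ℕ) :
    coeff (3 * n) (walkSeries (0 : R) 0) * ((n + 1) * (2 * n + 1)) = 4 ^ n * (3 * n).choose n := by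
  obtain ⟨T, hT⟩ := exists_isTernaryTreeSeries R
  refine mul_left_cancel₀ (two_ne_zero (α := R)) ?_
  linear_combination (n + 1) * (2 * n + 1) * two_mul_coeff_walkSeries_zero_zero hT n +
    4 ^ n * (2 * n + 1) * hT.add_one_mul_coeff_mul_three_sub n +
    2 * 4 ^ n * hT.two_mul_add_one_mul_coeff n

end Counting

end Kreweras

/-- Kreweras's product formula: the number of Kreweras words of length `3n` equals
`4^n / ((n+1)(2n+1)) * choose (3n) n`, stated multiplicatively. -/
theorem kreweras_count (n : ℕ) :
    Nat.card {w : List KLetter // IsKrewerasWord n w} * ((n + 1) * (2 * n + 1))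
      = 4 ^ n * Nat.choose (3 * n) n := by
  have h := Kreweras.coeff_walkSeries_zero_zero_mul (R := ℤ) n
  rw [Kreweras.coeff_walkSeries_zero_zero] at h
  exact_mod_cast h
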